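/- For real a with 0 < a < 1, the integral ∫_{-∞}^{∞} e^{a t}/(e^t + 1)^3 dt equals (1 - a)(2 - a) π / (2 sin(π a)). -/

import Mathlib

open Real

lemma aux_beta (a : ℝ) (ha0 : 0 < a) (ha1 : a < 1) :
    ∫ x in Set.Ioo (0:ℝ) 1, x ^ (a - 1) * (1 - x) ^ (2 - a)
      = (1 - a) * (2 - a) * π / (2 * Real.sin (π * a)) := by
  have h1 := ProbabilityTheory.beta_eq_betaIntegralReal a (3 - a) ha0 (by linarith)
  have h2 : Complex.betaIntegral a ((3 - a : ℝ) : ℂ) =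
      ((∫ x in Set.Ioo (0:ℝ) 1, x ^ (a - 1) * (1 - x) ^ (2 - a) : ℝ) : ℂ) := by
    rw [Complex.betaIntegral, intervalIntegral.integral_of_le zero_le_one,
      MeasureTheory.integral_Ioc_eq_integral_Ioo, ← integral_complex_ofReal]
    refine MeasureTheory.setIntegral_congr_fun measurableSet_Ioo fun x hx => ?_
    have hx0 : 0 ≤ x := hx.1.le
    have hx1 : 0 ≤ 1 - x := by linarith [hx.2]
    rw [Complex.ofReal_mul, Complex.ofReal_cpow hx0, Complex.ofReal_cpow hx1]
    push_cast
    congr 2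
    ring
  rw [h2, Complex.ofReal_re] at h1
  rw [← h1, ProbabilityTheory.beta]
  have e1 : Real.Gamma (3 - a) = (2 - a) * ((1 - a) * Real.Gamma (1 - a)) := by
    rw [← Real.Gamma_add_one (by linarith), show 1 - a + 1 = 2 - a by ring,
      ← Real.Gamma_add_one (by linarith)]
    congr 1; ring
  have e2 : Real.Gamma (a + (3 - a)) = 2 := by
    rw [show a + (3 - a) = ((2 : ℕ) : ℝ) + 1 by push_cast; ring, Real.Gamma_nat_eq_factorial]
    norm_num
  have e3 := Real.Gamma_mul_Gamma_one_sub a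
  rw [e1, e2, show Real.Gamma a * ((2 - a) * ((1 - a) * Real.Gamma (1 - a)))
    = (2 - a) * (1 - a) * (Real.Gamma a * Real.Gamma (1 - a)) by ring, e3]
  rw [mul_comm 2 (Real.sin _), ← div_div]
  ring

/-- For `0 < a < 1`, `∫ e^{a t}/(e^t + 1)^3 dt = (1-a)(2-a) π / (2 sin (π a))`. -/
theorem stmt2 (a : ℝ) (ha0 : 0 < a) (ha1 : a < 1) :
    ∫ t : ℝ, Real.exp (a * t) / (Real.exp t + 1) ^ 3
      = (1 - a) * (2 - a) * π / (2 * Real.sin (π * a)) := by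
  rw [← aux_beta a ha0 ha1, ← range_sigmoid, ← Set.image_univ,
    MeasureTheory.integral_image_eq_integral_deriv_smul_of_monotoneOn MeasurableSet.univ
      (fun x _ => (hasDerivAt_sigmoid x).hasDerivWithinAt) (sigmoid_monotone.monotoneOn _),
    MeasureTheory.setIntegral_univ]
  congr 1
  ext t
  have hw : 0 < Real.exp t + 1 := by positivity
  have s1 : sigmoid t = Real.exp t / (Real.exp t + 1) := by
    rw [sigmoid_def, Real.exp_neg]
    field_simp
  have s2 : 1 - sigmoid t = (Real.exp t + 1)⁻¹ := by
    rw [s1]; field_simp; ring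
  have p1 : sigmoid t * sigmoid t ^ (a - 1) = sigmoid t ^ a := by
    rw [Real.rpow_sub_one (sigmoid_pos t).ne']
    have := (sigmoid_pos t).ne'
    field_simp
  rw [smul_eq_mul, show sigmoid t * (1 - sigmoid t) * (sigmoid t ^ (a - 1) * (1 - sigmoid t) ^ (2 - a))
    = (sigmoid t * sigmoid t ^ (a - 1)) * ((1 - sigmoid t) * (1 - sigmoid t) ^ (2 - a)) by ring,
    p1, s2, s1, Real.div_rpow (Real.exp_pos t).le hw.le, Real.inv_rpow hw.le,
    Real.rpow_sub hw, ← Real.exp_mul, mul_comm t a, Real.rpow_two]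
  have := Real.rpow_pos_of_pos hw a
  field_simp
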